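/- Shifted product formula: let n ≥ 2, let (β₁, …, βₙ) ∈ B_∞ⁿ, and let w = (i₁, …, i_k) be a finite sequence of indices with 1 ≤ i_j ≤ n−1. Define the action of a single index i on a sequence by (β₁, …, βₙ) • i := (β₁, …, β_{i−1}, β_i ▷ β_{i+1}, β_i, β_{i+2}, …, βₙ), and let (β₁, …, βₙ) • w be the result of acting letter by letter. Then ∏^sh((β₁, …, βₙ) • w) = ∏^sh(β₁, …, βₙ) · σ_{i₁} ⋯ σ_{i_k}, where ∏^sh(β₁, …, βₙ) := β₁ · sh(β₂) ⋯ sh^{n−1}(βₙ). -/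

import Mathlib

/-- The braid relations on generators indexed by `ℕ` (generator `i` stands for
the Artin generator `σ_{i+1}` of the paper). -/
def braidRels : Set (FreeGroup ℕ) :=
  {r | (∃ i j : ℕ, i + 2 ≤ j ∧
          r = .of i * .of j * (.of i)⁻¹ * (.of j)⁻¹) ∨
       (∃ i : ℕ,
          r = .of i * .of (i + 1) * .of i *
              (.of (i + 1) * .of i * .of (i + 1))⁻¹)}

/-- The braid group on infinitely many strands. -/
abbrev Binf : Type := PresentedGroup braidRels

/-- `σ i` is the Artin generator `σ_{i+1}` of the paper (0-indexed). -/
def σ (i : ℕ) : Binf := PresentedGroup.of i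

lemma mk_rel_eq_one {r : FreeGroup ℕ} (h : r ∈ braidRels) :
    PresentedGroup.mk braidRels r = 1 :=
  (QuotientGroup.eq_one_iff r).mpr (Subgroup.subset_normalClosure h)

lemma shift_lift_eq_one :
    ∀ r ∈ braidRels, FreeGroup.lift (fun n => σ (n + 1)) r = 1 := by
  intro r hr
  have key : ∀ s ∈ braidRels, FreeGroup.lift (fun n => σ (n + 1)) s
      = PresentedGroup.mk braidRels (FreeGroup.map (· + 1) s) := by
    intro s _
    have : (FreeGroup.lift (fun n => σ (n + 1)) : FreeGroup ℕ →* Binf)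
        = (PresentedGroup.mk braidRels).comp (FreeGroup.map (· + 1)) := by
      apply FreeGroup.ext_hom
      intro x
      simp [σ, PresentedGroup.of]
    rw [this]; rfl
  rw [key r hr]
  apply mk_rel_eq_one
  rcases hr with ⟨i, j, hij, rfl⟩ | ⟨i, rfl⟩
  · exact Or.inl ⟨i + 1, j + 1, by omega, by simp⟩
  · exact Or.inr ⟨i + 1, by simp⟩

/-- The shift endomorphism of the braid group, mapping `σ i` to `σ (i+1)`. -/
def sh : Binf →* Binf := PresentedGroup.toGroup shift_lift_eq_one

@[simp] lemma sh_σ (i : ℕ) : sh (σ i) = σ (i + 1) :=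
  PresentedGroup.toGroup.of shift_lift_eq_one

/-- The shifted-conjugation (selfdistributive) operation on `Binf`:
`β₁ ▷ β₂ = β₁ · sh β₂ · σ₁ · (sh β₁)⁻¹`. -/
def sc (β₁ β₂ : Binf) : Binf := β₁ * sh β₂ * σ 0 * (sh β₁)⁻¹

/-- The shifted product `∏^sh(β₁, …, βₙ) = β₁ · sh β₂ ⋯ sh^{n-1} βₙ`. -/
def shProd : List Binf → Binf
  | [] => 1
  | a :: t => a * sh (shProd t)

/-- Action of a single (0-indexed) letter `i` on a sequence of braids:
positions `i` and `i+1` become `(βᵢ ▷ β_{i+1}, βᵢ)` (the index `i` here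
corresponds to the paper's index `i+1`). -/
def act1 : ℕ → List Binf → List Binf
  | 0, a :: b :: t => sc a b :: a :: t
  | n + 1, a :: t => a :: act1 n t
  | _, l => l

/-- Action of a word (list of 0-indexed letters), letter by letter. -/
def actW (l : List Binf) : List ℕ → List Binf
  | [] => l
  | i :: w => actW (act1 i l) w

lemma σ_comm (j : ℕ) : σ 0 * σ (j + 2) = σ (j + 2) * σ 0 := by
  have h : (FreeGroup.of 0 * .of (j + 2) * (.of 0)⁻¹ * (.of (j + 2))⁻¹ : FreeGroup ℕ)
      ∈ braidRels := Or.inl ⟨0, j + 2, by omega, rfl⟩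
  have h1 := mk_rel_eq_one h
  simp only [map_mul, map_inv] at h1
  exact mul_inv_eq_iff_eq_mul.mp (mul_inv_eq_one.mp h1)

lemma σ_comm_sh (x : Binf) : σ 0 * sh (sh x) = sh (sh x) * σ 0 := by
  have h : (MulAut.conj (σ 0)).toMonoidHom.comp (sh.comp sh) = sh.comp sh := by
    apply PresentedGroup.ext
    intro j
    have h1 : sh (sh (PresentedGroup.of j)) = σ (j + 2) := by
      change sh (sh (σ j)) = _
      simp
    simp only [MonoidHom.comp_apply, h1]
    change σ 0 * σ (j + 2) * (σ 0)⁻¹ = _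
    rw [σ_comm, mul_inv_cancel_right]
  have h2 : σ 0 * sh (sh x) * (σ 0)⁻¹ = sh (sh x) := DFunLike.congr_fun h x
  exact mul_inv_eq_iff_eq_mul.mp h2

lemma act1_length (i : ℕ) (l : List Binf) : (act1 i l).length = l.length := by
  induction i generalizing l with
  | zero => rcases l with _ | ⟨a, _ | ⟨b, t⟩⟩ <;> simp [act1]
  | succ i ih => rcases l with _ | ⟨a, t⟩ <;> simp [act1, ih]

lemma shProd_act1 (i : ℕ) (l : List Binf) (h : i + 2 ≤ l.length) :
    shProd (act1 i l) = shProd l * σ i := by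
  induction i generalizing l with
  | zero =>
    rcases l with _ | ⟨a, _ | ⟨b, t⟩⟩
    · simp at h
    · simp at h
    · simp only [act1, shProd, sc, map_mul, mul_assoc, inv_mul_cancel_left, σ_comm_sh]
  | succ i ih =>
    rcases l with _ | ⟨a, t⟩
    · simp at h
    · have h' : i + 2 ≤ t.length := by simp at h; omega
      simp [act1, shProd, ih t h', mul_assoc]

/-- shifted product formula
`∏^sh((β₁, …, βₙ) • w) = ∏^sh(β₁, …, βₙ) · σ_{i₁} ⋯ σ_{i_k}`
(indices in `w` are 0-indexed: `j ∈ w` stands for the paper's `σ_{j+1}`,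
and the constraint `1 ≤ i ≤ n-1` of the paper reads `j + 2 ≤ n`). -/
theorem shifted_product_formula (n : ℕ) (hn : 2 ≤ n)
    (l : List Binf) (hl : l.length = n)
    (w : List ℕ) (hw : ∀ j ∈ w, j + 2 ≤ n) :
    shProd (actW l w) = shProd l * (w.map σ).prod := by
  induction w generalizing l with
  | nil => simp [actW]
  | cons i w ih =>
    have hi : i + 2 ≤ n := hw i (by simp)
    rw [actW, ih (act1 i l) (by rw [act1_length, hl]) (fun j hj => hw j (by simp [hj])),
      shProd_act1 i l (by omega)]
    simp [mul_assoc]
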